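/- Kullback–Leibler average equals the normalized weighted geometric mean: let (Ω, 𝒜, μ) be a σ-finite measure space, let I be a nonempty finite index set, let f_i (i ∈ I) be μ-a.e. strictly positive probability densities with respect to μ, and let ω_i > 0 be scalars with ∑_{i∈I} ω_i = 1. Assume c := ∫ ∏_{i∈I} f_i(x)^{ω_i} dμ(x) satisfies 0 < c < ∞, and define f̄(x) := (1/c) ∏_{i∈I} f_i(x)^{ω_i}. Then f̄ is a probability density with respect to μ, and for every μ-a.e. strictly positive probability density f for which each D_KL(f‖f_i) and D_KL(f‖f̄) is well defined, one has ∑_{i∈I} ω_i D_KL(f‖f_i) ≥ −log c, with equality if and only if f = f̄ μ-almost everywhere; in particular f̄ minimizes the weighted Kullback–Leibler cost f ↦ ∑_{i∈I} ω_i D_KL(f‖f_i). -/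

import Mathlib

open MeasureTheory

/-!
Taking logarithms in `f̄ = (1/c) ∏ fᵢ ^ ωᵢ` gives `log f̄ = ∑ ωᵢ log fᵢ - log c`. As `∑ ωᵢ = 1`,
the weighted cost of a density `g` is therefore `D_KL(g‖f̄) - log c`, and everything reduces to
Gibbs' inequality `0 ≤ D_KL(g‖f̄)` and its equality case. The latter come from writing
`D_KL(g‖f̄) = ∫ f̄ · klFun (g / f̄)`, where `klFun` is nonnegative and vanishes only at `1`.
-/

open Finset InformationTheory Real

section Pointwise

theorem mul_klFun_div {a b : ℝ} (hb : b ≠ 0) :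
    b * klFun (a / b) = a * log (a / b) + (b - a) := by
  rw [klFun_apply]
  field_simp
  ring

variable {I : Type*} {s : Finset I} {w z : I → ℝ}

theorem prod_rpow_pos (hz : ∀ i ∈ s, 0 < z i) : 0 < ∏ i ∈ s, z i ^ w i :=
  prod_pos fun i hi => rpow_pos_of_pos (hz i hi) _

theorem log_prod_rpow (hz : ∀ i ∈ s, 0 < z i) :
    log (∏ i ∈ s, z i ^ w i) = ∑ i ∈ s, w i * log (z i) := by
  rw [log_prod fun i hi => (rpow_pos_of_pos (hz i hi) _).ne']
  exact sum_congr rfl fun i hi => log_rpow (hz i hi) _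

theorem sum_mul_mul_log_div (hw : ∑ i ∈ s, w i = 1) (hz : ∀ i ∈ s, 0 < z i) {c : ℝ} (hc : c ≠ 0)
    (a : ℝ) :
    ∑ i ∈ s, w i * (a * log (a / z i)) =
      a * log (a / ((∏ i ∈ s, z i ^ w i) / c)) - a * log c := by
  rcases eq_or_ne a 0 with rfl | ha
  · simp
  have hprod : ∏ i ∈ s, z i ^ w i ≠ 0 := (prod_rpow_pos hz).ne'
  calc ∑ i ∈ s, w i * (a * log (a / z i))
      = ∑ i ∈ s, (w i * (a * log a) - a * (w i * log (z i))) :=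
        sum_congr rfl fun i hi => by rw [log_div ha (hz i hi).ne']; ring
    _ = a * log a - a * log (∏ i ∈ s, z i ^ w i) := by
        rw [sum_sub_distrib, ← sum_mul, ← mul_sum, hw, one_mul, log_prod_rpow hz]
    _ = a * log (a / ((∏ i ∈ s, z i ^ w i) / c)) - a * log c := by
        rw [log_div ha (div_ne_zero hprod hc), log_div hprod hc]
        ring

end Pointwise

section Gibbs

variable {Ω : Type*} [MeasurableSpace Ω] {μ : Measure Ω} {f g : Ω → ℝ}

/-- The Kullback–Leibler divergence of `f` from `g`, both densities with respect to `μ`, as a real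
number. It takes the junk value `0` when the integrand is not integrable. -/
noncomputable def densityKLDiv (μ : Measure Ω) (f g : Ω → ℝ) : ℝ :=
  ∫ x, f x * log (f x / g x) ∂μ

theorem mul_klFun_div_ae_eq (hg0 : ∀ᵐ x ∂μ, 0 < g x) :
    (fun x => g x * klFun (f x / g x)) =ᵐ[μ]
      fun x => f x * log (f x / g x) + (g x - f x) := by
  filter_upwards [hg0] with x hx using mul_klFun_div hx.ne'

theorem mul_klFun_div_ae_nonneg (hf0 : 0 ≤ᵐ[μ] f) (hg0 : ∀ᵐ x ∂μ, 0 < g x) :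
    0 ≤ᵐ[μ] fun x => g x * klFun (f x / g x) := by
  filter_upwards [hf0, hg0] with x hfx hgx
  exact mul_nonneg hgx.le (klFun_nonneg (div_nonneg hfx hgx.le))

theorem mul_klFun_div_ae_eq_zero_iff (hf0 : 0 ≤ᵐ[μ] f) (hg0 : ∀ᵐ x ∂μ, 0 < g x) :
    (fun x => g x * klFun (f x / g x)) =ᵐ[μ] 0 ↔ f =ᵐ[μ] g := by
  refine Filter.eventually_congr ?_
  filter_upwards [hf0, hg0] with x hfx hgx
  rw [Pi.zero_apply, mul_eq_zero_iff_left hgx.ne', klFun_eq_zero_iff (div_nonneg hfx hgx.le),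
    div_eq_one_iff_eq hgx.ne']

theorem integral_mul_klFun_div (hf : Integrable f μ) (hg : Integrable g μ)
    (hg0 : ∀ᵐ x ∂μ, 0 < g x) (hfg : Integrable (fun x => f x * log (f x / g x)) μ) :
    ∫ x, g x * klFun (f x / g x) ∂μ = densityKLDiv μ f g + (∫ x, g x ∂μ - ∫ x, f x ∂μ) := by
  have hsub : Integrable (fun x => g x - f x) μ := hg.sub hf
  rw [integral_congr_ae (mul_klFun_div_ae_eq hg0), integral_add hfg hsub, integral_sub hg hf,
    densityKLDiv]

theorem integral_sub_integral_le_densityKLDiv (hf : Integrable f μ) (hg : Integrable g μ)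
    (hf0 : 0 ≤ᵐ[μ] f) (hg0 : ∀ᵐ x ∂μ, 0 < g x)
    (hfg : Integrable (fun x => f x * log (f x / g x)) μ) :
    ∫ x, f x ∂μ - ∫ x, g x ∂μ ≤ densityKLDiv μ f g := by
  have hnonneg := integral_nonneg_of_ae (mul_klFun_div_ae_nonneg hf0 hg0)
  rw [integral_mul_klFun_div hf hg hg0 hfg] at hnonneg
  linarith

theorem densityKLDiv_eq_integral_sub_integral_iff (hf : Integrable f μ) (hg : Integrable g μ)
    (hf0 : 0 ≤ᵐ[μ] f) (hg0 : ∀ᵐ x ∂μ, 0 < g x)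
    (hfg : Integrable (fun x => f x * log (f x / g x)) μ) :
    densityKLDiv μ f g = ∫ x, f x ∂μ - ∫ x, g x ∂μ ↔ f =ᵐ[μ] g := by
  have hint : Integrable (fun x => g x * klFun (f x / g x)) μ :=
    (hfg.add (hg.sub hf)).congr (mul_klFun_div_ae_eq hg0).symm
  rw [← mul_klFun_div_ae_eq_zero_iff hf0 hg0,
    ← integral_eq_zero_iff_of_nonneg_ae (mul_klFun_div_ae_nonneg hf0 hg0) hint,
    integral_mul_klFun_div hf hg hg0 hfg]
  constructor <;> intro h <;> linarith

end Gibbs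

section GeometricMean

variable {Ω : Type*} [MeasurableSpace Ω] {μ : Measure Ω} {I : Type*} {s : Finset I}
  {w : I → ℝ} {f : I → Ω → ℝ} {g : Ω → ℝ}

/-- The weighted geometric mean of the functions `f i`, `i ∈ s`, divided by its integral: the
candidate minimizer of the weighted Kullback–Leibler cost. It is the zero function when the
geometric mean is not integrable. -/
noncomputable def normalizedGeomMean (μ : Measure Ω) (s : Finset I) (w : I → ℝ) (f : I → Ω → ℝ)
    (x : Ω) : ℝ :=
  (∏ i ∈ s, f i x ^ w i) / ∫ y, ∏ i ∈ s, f i y ^ w i ∂μ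

theorem integral_normalizedGeomMean (hc : ∫ x, ∏ i ∈ s, f i x ^ w i ∂μ ≠ 0) :
    ∫ x, normalizedGeomMean μ s w f x ∂μ = 1 := by
  simp only [normalizedGeomMean, integral_div, div_self hc]

theorem normalizedGeomMean_ae_pos (hf : ∀ i ∈ s, ∀ᵐ x ∂μ, 0 < f i x)
    (hc : 0 < ∫ x, ∏ i ∈ s, f i x ^ w i ∂μ) : ∀ᵐ x ∂μ, 0 < normalizedGeomMean μ s w f x := by
  filter_upwards [(ae_ball_iff s.countable_toSet).2 hf] with x hx
  exact div_pos (prod_rpow_pos hx) hc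

theorem sum_mul_mul_log_div_ae_eq (hw : ∑ i ∈ s, w i = 1) (hf : ∀ i ∈ s, ∀ᵐ x ∂μ, 0 < f i x)
    (hc : ∫ x, ∏ i ∈ s, f i x ^ w i ∂μ ≠ 0) :
    (fun x => ∑ i ∈ s, w i * (g x * log (g x / f i x))) =ᵐ[μ] fun x =>
      g x * log (g x / normalizedGeomMean μ s w f x) -
        g x * log (∫ y, ∏ i ∈ s, f i y ^ w i ∂μ) := by
  filter_upwards [(ae_ball_iff s.countable_toSet).2 hf] with x hx
  exact sum_mul_mul_log_div hw hx hc (g x)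

theorem integrable_mul_log_div_normalizedGeomMean (hw : ∑ i ∈ s, w i = 1)
    (hf : ∀ i ∈ s, ∀ᵐ x ∂μ, 0 < f i x) (hc : ∫ x, ∏ i ∈ s, f i x ^ w i ∂μ ≠ 0)
    (hg : Integrable g μ) (hgf : ∀ i ∈ s, Integrable (fun x => g x * log (g x / f i x)) μ) :
    Integrable (fun x => g x * log (g x / normalizedGeomMean μ s w f x)) μ := by
  have hsum : Integrable (fun x => ∑ i ∈ s, w i * (g x * log (g x / f i x))) μ :=
    integrable_finsetSum s fun i hi => (hgf i hi).const_mul (w i)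
  refine (hsum.add (hg.mul_const (log (∫ y, ∏ i ∈ s, f i y ^ w i ∂μ)))).congr ?_
  filter_upwards [sum_mul_mul_log_div_ae_eq (g := g) hw hf hc] with x hx
  rw [Pi.add_apply, hx, sub_add_cancel]

theorem sum_mul_densityKLDiv (hw : ∑ i ∈ s, w i = 1) (hf : ∀ i ∈ s, ∀ᵐ x ∂μ, 0 < f i x)
    (hc : ∫ x, ∏ i ∈ s, f i x ^ w i ∂μ ≠ 0) (hg : Integrable g μ)
    (hgf : ∀ i ∈ s, Integrable (fun x => g x * log (g x / f i x)) μ) :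
    ∑ i ∈ s, w i * densityKLDiv μ g (f i) =
      densityKLDiv μ g (normalizedGeomMean μ s w f) -
        (∫ x, g x ∂μ) * log (∫ x, ∏ i ∈ s, f i x ^ w i ∂μ) := by
  calc ∑ i ∈ s, w i * densityKLDiv μ g (f i)
      = ∫ x, ∑ i ∈ s, w i * (g x * log (g x / f i x)) ∂μ := by
        rw [integral_finsetSum s fun i hi => (hgf i hi).const_mul (w i)]
        simp only [integral_const_mul, densityKLDiv]
    _ = _ := by
        rw [integral_congr_ae (sum_mul_mul_log_div_ae_eq hw hf hc),
          integral_sub (integrable_mul_log_div_normalizedGeomMean hw hf hc hg hgf)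
            (hg.mul_const _), integral_mul_const, densityKLDiv]

end GeometricMean

theorem KL_average_eq_normalized_weighted_geometric_mean_general
    {Ω : Type*} [MeasurableSpace Ω] {μ : Measure Ω} {I : Type*} {s : Finset I}
    {f : I → Ω → ℝ} (hf : ∀ i ∈ s, ∀ᵐ x ∂μ, 0 < f i x) {w : I → ℝ} (hw : ∑ i ∈ s, w i = 1)
    (hc : 0 < ∫ x, ∏ i ∈ s, f i x ^ w i ∂μ) :
    ∫ x, normalizedGeomMean μ s w f x ∂μ = 1 ∧
    ∀ g : Ω → ℝ, 0 ≤ᵐ[μ] g → ∫ x, g x ∂μ = 1 →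
      (∀ i ∈ s, Integrable (fun x => g x * log (g x / f i x)) μ) →
      -log (∫ x, ∏ i ∈ s, f i x ^ w i ∂μ) ≤ ∑ i ∈ s, w i * densityKLDiv μ g (f i) ∧
      (∑ i ∈ s, w i * densityKLDiv μ g (f i) = -log (∫ x, ∏ i ∈ s, f i x ^ w i ∂μ) ↔
        g =ᵐ[μ] normalizedGeomMean μ s w f) := by
  have hmean := integral_normalizedGeomMean hc.ne'
  refine ⟨hmean, fun g hg0 hg1 hgf => ?_⟩
  have hg : Integrable g μ := integrable_of_integral_eq_one hg1
  have hmean_int : Integrable (normalizedGeomMean μ s w f) μ :=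
    integrable_of_integral_eq_one hmean
  have hmean_pos := normalizedGeomMean_ae_pos hf hc
  have hgmean := integrable_mul_log_div_normalizedGeomMean hw hf hc.ne' hg hgf
  have hgibbs := integral_sub_integral_le_densityKLDiv hg hmean_int hg0 hmean_pos hgmean
  have hgibbs_eq := densityKLDiv_eq_integral_sub_integral_iff hg hmean_int hg0 hmean_pos hgmean
  rw [hg1, hmean, sub_self] at hgibbs hgibbs_eq
  rw [sum_mul_densityKLDiv hw hf hc.ne' hg hgf, hg1, one_mul, ← hgibbs_eq]
  exact ⟨by linarith, by rw [sub_eq_neg_self]⟩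

/-- the Kullback-Leibler average equals the normalized weighted
geometric mean `f̄ = (1/c) ∏ fᵢ^ωᵢ`: `f̄` is a probability density, the weighted
KL cost of any density `f` is at least `−log c`, with equality iff `f = f̄` a.e.;
in particular `f̄` minimizes the weighted KL cost. -/
theorem KL_average_eq_normalized_weighted_geometric_mean
    {Ω : Type*} [MeasurableSpace Ω] (μ : Measure Ω) [SigmaFinite μ]
    {I : Type*} [Fintype I] [Nonempty I]
    (f : I → Ω → ℝ)
    (hmeas : ∀ i, Measurable (f i))
    (hnn : ∀ i x, 0 ≤ f i x)
    (hpos : ∀ i, ∀ᵐ x ∂μ, 0 < f i x)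
    (hone : ∀ i, ∫ x, f i x ∂μ = 1)
    (ω : I → ℝ) (hω : ∀ i, 0 < ω i) (hωs : ∑ i, ω i = 1)
    (c : ℝ) (hc : c = ∫ x, ∏ i, f i x ^ ω i ∂μ)
    (hcpos : 0 < c)
    (hcfin : Integrable (fun x => ∏ i, f i x ^ ω i) μ)
    (fbar : Ω → ℝ) (hfbar : ∀ x, fbar x = (∏ i, f i x ^ ω i) / c) :
    (∫ x, fbar x ∂μ) = 1 ∧
    ∀ g : Ω → ℝ, Measurable g → (∀ x, 0 ≤ g x) → (∀ᵐ x ∂μ, 0 < g x) →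
      (∫ x, g x ∂μ) = 1 →
      (∀ i, Integrable (fun x => g x * Real.log (g x / f i x)) μ) →
      Integrable (fun x => g x * Real.log (g x / fbar x)) μ →
      (-Real.log c ≤ ∑ i, ω i * ∫ x, g x * Real.log (g x / f i x) ∂μ) ∧
      ((∑ i, ω i * ∫ x, g x * Real.log (g x / f i x) ∂μ) = -Real.log c ↔
        g =ᵐ[μ] fbar) := by
  obtain rfl : fbar = normalizedGeomMean μ univ ω f := funext fun x => by rw [hfbar, hc]; rfl
  subst hc
  have ⟨hmean, hcost⟩ :=
    KL_average_eq_normalized_weighted_geometric_mean_general (fun i _ => hpos i) hωs hcpos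
  exact ⟨hmean, fun g _ hg0 _ hg1 hgf _ => hcost g (ae_of_all μ hg0) hg1 fun i _ => hgf i⟩
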